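/- arXiv:2104.04035 — 5 statements merged into one kernel-verified Lean document; each statement's English description precedes it below -/
import Mathlib

section
/- Let $M, C, K \in \mathbb{R}^{n\times n}$ be symmetric matrices and $g \in \mathbb{R}^n$. Suppose $\lambda : \mathbb{R} \to \mathbb{C}$ and $x : \mathbb{R} \to \mathbb{C}^n$ are differentiable at $0$ and satisfy $\big(\lambda(t)^2 M + \lambda(t)(C + t\, g g^\top) + K\big)x(t) = 0$ for all $t$ in a neighborhood of $0$. If $x(0)^\top \big(2\lambda(0) M + C\big) x(0) \neq 0$, then $\lambda'(0) = -\dfrac{\lambda(0)\,\big(g^\top x(0)\big)^2}{x(0)^\top \big(2\lambda(0) M + C\big)x(0)}$. -/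
open Matrix

/-!
Subtracting the pencil at the base point and pairing with a left null vector `y` there gives, for
every nearby `t`,
`(lam t - lam t₀) * (y ⬝ᵥ ((lam t + lam t₀) • M t₀ + C t₀) *ᵥ x t) + y ⬝ᵥ R t *ᵥ x t = 0`,
where `R t` is the pencil with coefficients `M t - M t₀`, `C t - C t₀`, `K t - K t₀` at `lam t`.
Since `R t` only involves increments of the coefficients, after division by `t - t₀` continuity of
`lam` and `x` is enough to pass to the limit: the eigenvalue is automatically differentiable.
For symmetric coefficients the transpose of the eigenvector itself serves as `y`.
-/

open Filter Topology

section Pencil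

variable {R ι : Type*} [CommSemiring R]

/-- The quadratic matrix polynomial `l² M + l C + K`, with mass, damping and stiffness matrices
`M`, `C`, `K`; its null vectors are the eigenvectors of the quadratic eigenvalue problem. -/
def quadraticPencil (M C K : Matrix ι ι R) (l : R) : Matrix ι ι R :=
  l ^ 2 • M + l • C + K

theorem isSymm_quadraticPencil {M C K : Matrix ι ι R} (hM : M.IsSymm) (hC : C.IsSymm)
    (hK : K.IsSymm) (l : R) : (quadraticPencil M C K l).IsSymm :=
  ((hM.smul _).add (hC.smul _)).add hK

theorem smul_quadraticPencil {S : Type*} [Monoid S] [DistribMulAction S R] [SMulCommClass S R R]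
    (s : S) (M C K : Matrix ι ι R) (l : R) :
    s • quadraticPencil M C K l = quadraticPencil (s • M) (s • C) (s • K) l := by
  simp only [quadraticPencil, smul_add, smul_comm s]

theorem quadraticPencil_sub_quadraticPencil {R : Type*} [CommRing R]
    (M M₀ C C₀ K K₀ : Matrix ι ι R) (l l₀ : R) :
    quadraticPencil M C K l - quadraticPencil M₀ C₀ K₀ l₀ =
      (l - l₀) • ((l + l₀) • M₀ + C₀) + quadraticPencil (M - M₀) (C - C₀) (K - K₀) l := by
  simp only [quadraticPencil]
  module

theorem vecMul_eq_mulVec_of_isSymm [Fintype ι] {A : Matrix ι ι R} (hA : A.IsSymm) (v : ι → R) :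
    v ᵥ* A = A *ᵥ v := by
  rw [← mulVec_transpose, hA.eq]

theorem dotProduct_vecMulVec_mulVec {m n : Type*} [Fintype m] [Fintype n] (u v : m → R)
    (w z : n → R) : u ⬝ᵥ vecMulVec v w *ᵥ z = (u ⬝ᵥ v) * (w ⬝ᵥ z) := by
  rw [vecMulVec_mulVec, op_smul_eq_smul, dotProduct_smul, smul_eq_mul, mul_comm]

theorem tendsto_dotProduct_quadraticPencil_mulVec [TopologicalSpace R] [IsTopologicalSemiring R]
    [Fintype ι] {α : Type*} {F : Filter α} {M C K : α → Matrix ι ι R} {M₀ C₀ K₀ : Matrix ι ι R}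
    {l : α → R} {l₀ : R} {x : α → ι → R} {x₀ : ι → R} (hM : Tendsto M F (𝓝 M₀))
    (hC : Tendsto C F (𝓝 C₀)) (hK : Tendsto K F (𝓝 K₀)) (hl : Tendsto l F (𝓝 l₀))
    (hx : Tendsto x F (𝓝 x₀)) (y : ι → R) :
    Tendsto (fun a => y ⬝ᵥ quadraticPencil (M a) (C a) (K a) (l a) *ᵥ x a) F
      (𝓝 (y ⬝ᵥ quadraticPencil M₀ C₀ K₀ l₀ *ᵥ x₀)) := by
  have hpencil : Tendsto (fun a => quadraticPencil (M a) (C a) (K a) (l a)) F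
      (𝓝 (quadraticPencil M₀ C₀ K₀ l₀)) :=
    (((hl.pow 2).smul hM).add (hl.smul hC)).add hK
  have hpairing : Continuous fun p : Matrix ι ι R × (ι → R) => y ⬝ᵥ p.1 *ᵥ p.2 :=
    continuous_const.dotProduct (continuous_fst.matrix_mulVec continuous_snd)
  have hcomp := (hpairing.tendsto (quadraticPencil M₀ C₀ K₀ l₀, x₀)).comp (hpencil.prodMk_nhds hx)
  exact hcomp

end Pencil

section Slope

variable {k R ι : Type*} [Field k] [CommRing R] [Algebra k R]

theorem slope_quadraticPencil (M C K : k → Matrix ι ι R) (lam : k → R) (t₀ t : k) :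
    slope (fun s => quadraticPencil (M s) (C s) (K s) (lam s)) t₀ t =
      slope lam t₀ t • ((lam t + lam t₀) • M t₀ + C t₀) +
        quadraticPencil (slope M t₀ t) (slope C t₀ t) (slope K t₀ t) (lam t) := by
  simp only [slope, vsub_eq_sub, quadraticPencil_sub_quadraticPencil, smul_add (t - t₀)⁻¹,
    smul_quadraticPencil, smul_assoc]

theorem dotProduct_slope_mulVec_eq_zero [Fintype ι] {A : k → Matrix ι ι R}
    {t₀ t : k} {y v : ι → R} (hleft : y ᵥ* A t₀ = 0) (hright : A t *ᵥ v = 0) :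
    y ⬝ᵥ slope A t₀ t *ᵥ v = 0 := by
  rw [slope, vsub_eq_sub, smul_mulVec, sub_mulVec, hright, dotProduct_smul, dotProduct_sub,
    dotProduct_mulVec, hleft, zero_dotProduct, dotProduct_zero, sub_zero, smul_zero]

end Slope

section Perturbation

-- The derivative API needs a norm on matrices; the entrywise one induces their product topology.
open scoped Matrix.Norms.Elementwise

variable {𝕜 𝔽 ι : Type*} [NontriviallyNormedField 𝕜] [NormedField 𝔽] [NormedAlgebra 𝕜 𝔽]
  [Fintype ι]

theorem hasDerivAt_of_tendsto_slope_mul {f a : 𝕜 → 𝔽} {t₀ : 𝕜} {a₀ b : 𝔽}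
    (ha : Tendsto a (𝓝[≠] t₀) (𝓝 a₀)) (ha₀ : a₀ ≠ 0)
    (hfa : Tendsto (fun t => slope f t₀ t * a t) (𝓝[≠] t₀) (𝓝 b)) :
    HasDerivAt f (b / a₀) t₀ := by
  rw [hasDerivAt_iff_tendsto_slope]
  refine (hfa.div ha ha₀).congr' ?_
  filter_upwards [ha.eventually_ne ha₀] with t ht
  exact mul_div_cancel_right₀ _ ht

theorem hasDerivAt_eigenvalue_of_vecMul_eq_zero {M C K : 𝕜 → Matrix ι ι 𝔽}
    {M' C' K' : Matrix ι ι 𝔽} {lam : 𝕜 → 𝔽} {x : 𝕜 → ι → 𝔽} {y : ι → 𝔽} {t₀ : 𝕜}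
    (hM : HasDerivAt M M' t₀) (hC : HasDerivAt C C' t₀) (hK : HasDerivAt K K' t₀)
    (hlam : ContinuousAt lam t₀) (hx : ContinuousAt x t₀)
    (hright : ∀ᶠ t in 𝓝 t₀, quadraticPencil (M t) (C t) (K t) (lam t) *ᵥ x t = 0)
    (hleft : y ᵥ* quadraticPencil (M t₀) (C t₀) (K t₀) (lam t₀) = 0)
    (hden : y ⬝ᵥ ((2 * lam t₀) • M t₀ + C t₀) *ᵥ x t₀ ≠ 0) :
    HasDerivAt lam (-(y ⬝ᵥ quadraticPencil M' C' K' (lam t₀) *ᵥ x t₀) /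
      (y ⬝ᵥ ((2 * lam t₀) • M t₀ + C t₀) *ᵥ x t₀)) t₀ := by
  have hlam_tendsto : Tendsto lam (𝓝[≠] t₀) (𝓝 (lam t₀)) := hlam.mono_left nhdsWithin_le_nhds
  have hx_tendsto : Tendsto x (𝓝[≠] t₀) (𝓝 (x t₀)) := hx.mono_left nhdsWithin_le_nhds
  have hden_tendsto : Tendsto (fun t => y ⬝ᵥ ((lam t + lam t₀) • M t₀ + C t₀) *ᵥ x t) (𝓝[≠] t₀)
      (𝓝 (y ⬝ᵥ ((2 * lam t₀) • M t₀ + C t₀) *ᵥ x t₀)) := by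
    have h := tendsto_dotProduct_quadraticPencil_mulVec (tendsto_const_nhds (x := 0))
      (tendsto_const_nhds (x := M t₀)) (tendsto_const_nhds (x := C t₀))
      (hlam_tendsto.add_const (lam t₀)) hx_tendsto y
    simpa only [quadraticPencil, smul_zero, zero_add, ← two_mul] using h
  refine hasDerivAt_of_tendsto_slope_mul hden_tendsto hden ?_
  refine (tendsto_dotProduct_quadraticPencil_mulVec hM.tendsto_slope hC.tendsto_slope
    hK.tendsto_slope hlam_tendsto hx_tendsto y).neg.congr' ?_
  filter_upwards [hright.filter_mono nhdsWithin_le_nhds] with t ht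
  have hslope := dotProduct_slope_mulVec_eq_zero
    (A := fun s => quadraticPencil (M s) (C s) (K s) (lam s)) hleft ht
  rw [slope_quadraticPencil, add_mulVec, smul_mulVec, dotProduct_add, dotProduct_smul,
    smul_eq_mul] at hslope
  exact (eq_neg_of_add_eq_zero_left hslope).symm

theorem qep_eigenvalue_derivative_general {M C K : Matrix ι ι 𝔽} (hM : M.IsSymm) (hC : C.IsSymm)
    (hK : K.IsSymm) {g : ι → 𝔽} {lam : 𝕜 → 𝔽} {x : 𝕜 → ι → 𝔽}
    (hlam : ContinuousAt lam 0) (hx : ContinuousAt x 0)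
    (heq : ∀ᶠ t in 𝓝 (0 : 𝕜),
      (lam t ^ 2 • M + lam t • (C + algebraMap 𝕜 𝔽 t • vecMulVec g g) + K) *ᵥ x t = 0)
    (hden : x 0 ⬝ᵥ ((2 * lam 0) • M + C) *ᵥ x 0 ≠ 0) :
    HasDerivAt lam (-(lam 0 * (g ⬝ᵥ x 0) ^ 2) / (x 0 ⬝ᵥ ((2 * lam 0) • M + C) *ᵥ x 0)) 0 := by
  have halgebraMap : HasDerivAt (algebraMap 𝕜 𝔽) 1 0 := by
    rw [← map_one (algebraMap 𝕜 𝔽)]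
    exact (algebraMapCLM 𝕜 𝔽).hasDerivAt
  have hdamping := (halgebraMap.smul_const (vecMulVec g g)).const_add C
  rw [one_smul] at hdamping
  have hdamping_zero : C + algebraMap 𝕜 𝔽 0 • vecMulVec g g = C := by
    rw [map_zero, zero_smul, add_zero]
  have hleft : x 0 ᵥ* quadraticPencil M (C + algebraMap 𝕜 𝔽 0 • vecMulVec g g) K (lam 0) = 0 := by
    rw [vecMul_eq_mulVec_of_isSymm]
    · exact heq.self_of_nhds
    · exact isSymm_quadraticPencil hM (hdamping_zero.symm ▸ hC) hK _
  have hnum : x 0 ⬝ᵥ quadraticPencil 0 (vecMulVec g g) 0 (lam 0) *ᵥ x 0 =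
      lam 0 * (g ⬝ᵥ x 0) ^ 2 := by
    simp only [quadraticPencil, smul_zero, zero_add, add_zero, smul_mulVec, dotProduct_smul,
      smul_eq_mul, dotProduct_vecMulVec_mulVec, dotProduct_comm (x 0) g, sq]
  have h := hasDerivAt_eigenvalue_of_vecMul_eq_zero (hasDerivAt_const 0 M) hdamping
    (hasDerivAt_const 0 K) hlam hx heq hleft (hdamping_zero.symm ▸ hden)
  rwa [hnum, hdamping_zero] at h

end Perturbation

/-- First-order perturbation formula for a quadratic eigenvalue with respect to
a viscosity parameter, with rank-one derivative `g gᵀ` of the damping matrix. -/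
theorem qep_eigenvalue_derivative (n : ℕ) (M C K : Matrix (Fin n) (Fin n) ℝ)
    (hM : M.IsSymm) (hC : C.IsSymm) (hK : K.IsSymm) (g : Fin n → ℝ)
    (lam : ℝ → ℂ) (x : ℝ → Fin n → ℂ)
    (hlam : DifferentiableAt ℝ lam 0) (hx : DifferentiableAt ℝ x 0)
    (heq : ∀ᶠ t in nhds (0 : ℝ),
      ((lam t) ^ 2 • M.map Complex.ofReal
        + (lam t) • (C.map Complex.ofReal
            + (t : ℂ) • vecMulVec (fun i => (g i : ℂ)) (fun i => (g i : ℂ)))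
        + K.map Complex.ofReal).mulVec (x t) = 0)
    (hden : x 0 ⬝ᵥ ((2 * lam 0) • M.map Complex.ofReal
        + C.map Complex.ofReal).mulVec (x 0) ≠ 0) :
    deriv lam 0 = -(lam 0 * ((fun i => (g i : ℂ)) ⬝ᵥ x 0) ^ 2) /
      (x 0 ⬝ᵥ ((2 * lam 0) • M.map Complex.ofReal
        + C.map Complex.ofReal).mulVec (x 0)) :=
  (qep_eigenvalue_derivative_general (hM.map _) (hC.map _) (hK.map _) hlam.continuousAt
    hx.continuousAt heq hden).deriv
end

section
/- Let $D \in \mathbb{C}^{m\times m}$ be diagonal, $\rho \in \mathbb{C}$, and $u, z \in \mathbb{C}^m$ with $u_i \neq 0$ and $z_i \neq 0$ for all $i$. Let $s \in \mathbb{C}^m$ satisfy $s_i \neq 0$ and $s_i^2 = z_i/u_i$ for all $i$, set $S = \operatorname{diag}(s_1, \dots, s_m)$ and $\hat z = S u$. Then $u^\top S^2 = z^\top$ and $S\,(D + \rho\, u z^\top)\,S^{-1} = D + \rho\, \hat z \hat z^\top$; consequently, for any $\lambda \in \mathbb{C}$ and $x \in \mathbb{C}^m$, $(D + \rho\, u z^\top)x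 = \lambda x$ holds if and only if $(D + \rho\, \hat z \hat z^\top)(Sx) = \lambda (Sx)$. -/
open Matrix

/-!
A matrix `S` that commutes with `D` moves past `D + ρ • u zᵀ` once `zᵀ` factors as `vᵀ S`: the
rank-one part `u vᵀ S` then becomes `(S u) vᵀ`. For `S = diagonal s`, the choice
`s i ^ 2 = z i / u i` is exactly the one that makes `v = S u`, so that the new rank-one part is
symmetric.
-/

section Intertwining

variable {m n α R : Type*} [Fintype m] [Fintype n] [NonUnitalSemiring R]

theorem mul_add_smul_vecMulVec_vecMul [Monoid α] [DistribMulAction α R] [IsScalarTower α R R]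
    [SMulCommClass α R R] {S : Matrix m n R} {D : Matrix n n R} {D' : Matrix m m R}
    (h : S * D = D' * S) (ρ : α) (u : n → R) (v : m → R) :
    S * (D + ρ • vecMulVec u (v ᵥ* S)) = (D' + ρ • vecMulVec (S *ᵥ u) v) * S := by
  rw [Matrix.mul_add, Matrix.add_mul, h, Matrix.mul_smul, Matrix.smul_mul, mul_vecMulVec,
    vecMulVec_mul]

theorem mulVec_eq_smul_iff_of_mul_eq_mul [DistribSMul α R] [SMulCommClass α R R]
    {S : Matrix m n R} {A : Matrix n n R} {B : Matrix m m R} (hS : Function.Injective S.mulVec)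
    (h : S * A = B * S) (c : α) (x : n → R) :
    A *ᵥ x = c • x ↔ B *ᵥ (S *ᵥ x) = c • S *ᵥ x := by
  rw [mulVec_mulVec, ← h, ← mulVec_mulVec, ← mulVec_smul, hS.eq_iff]

end Intertwining

section Diagonal

variable {n R : Type*} [Fintype n] [DecidableEq n]

theorem diagonal_mulVec_eq_vecMul_diagonal [NonUnitalCommSemiring R] (s u : n → R) :
    diagonal s *ᵥ u = u ᵥ* diagonal s := by
  rw [← mulVec_transpose, diagonal_transpose]

theorem dpr1_to_dpr1csym_general [CommRing R] (d u z : n → R) (ρ : R) (s : n → R)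
    (hs : ∀ i, IsUnit (s i)) (hz : ∀ i, s i ^ 2 * u i = z i) :
    u ᵥ* (diagonal s * diagonal s) = z ∧
    diagonal s * (diagonal d + ρ • vecMulVec u z) * (diagonal s)⁻¹ =
      diagonal d + ρ • vecMulVec (diagonal s *ᵥ u) (diagonal s *ᵥ u) ∧
    ∀ (c : R) (x : n → R),
      (diagonal d + ρ • vecMulVec u z) *ᵥ x = c • x ↔
        (diagonal d + ρ • vecMulVec (diagonal s *ᵥ u) (diagonal s *ᵥ u)) *ᵥ (diagonal s *ᵥ x) =
          c • diagonal s *ᵥ x := by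
  have vecMul_sq : u ᵥ* (diagonal s * diagonal s) = z := by
    ext i
    rw [diagonal_mul_diagonal, vecMul_diagonal, ← hz i, sq, mul_comm]
  have intertwine : diagonal s * (diagonal d + ρ • vecMulVec u z) =
      (diagonal d + ρ • vecMulVec (diagonal s *ᵥ u) (diagonal s *ᵥ u)) * diagonal s := by
    rw [← mul_add_smul_vecMulVec_vecMul (commute_diagonal s d).eq,
      diagonal_mulVec_eq_vecMul_diagonal, vecMul_vecMul, vecMul_sq]
  have isUnit_det : IsUnit (diagonal s).det :=
    (isUnit_iff_isUnit_det _).mp (isUnit_diagonal.mpr (Pi.isUnit_iff.mpr hs))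
  refine ⟨vecMul_sq, ?_, mulVec_eq_smul_iff_of_mul_eq_mul ?_ intertwine⟩
  · rw [intertwine, mul_nonsing_inv_cancel_right _ _ isUnit_det]
  · exact mulVec_injective_of_det_mem_nonZeroDivisors isUnit_det.mem_nonZeroDivisors

end Diagonal

/-- A DPR1 matrix with nowhere-zero vectors `u`, `z` is diagonally similar to a
DPR1 complex symmetric matrix with the same eigenvalues. -/
theorem dpr1_to_dpr1csym (m : ℕ) (d u z : Fin m → ℂ) (ρ : ℂ)
    (hu : ∀ i, u i ≠ 0) (hz : ∀ i, z i ≠ 0)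
    (s : Fin m → ℂ) (hs : ∀ i, s i ≠ 0) (hs2 : ∀ i, s i ^ 2 = z i / u i) :
    vecMul u (Matrix.diagonal s * Matrix.diagonal s) = z ∧
    Matrix.diagonal s * (Matrix.diagonal d + ρ • vecMulVec u z) * (Matrix.diagonal s)⁻¹ =
      Matrix.diagonal d +
        ρ • vecMulVec ((Matrix.diagonal s).mulVec u) ((Matrix.diagonal s).mulVec u) ∧
    ∀ (lam : ℂ) (x : Fin m → ℂ),
      (Matrix.diagonal d + ρ • vecMulVec u z).mulVec x = lam • x ↔
        (Matrix.diagonal d +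
            ρ • vecMulVec ((Matrix.diagonal s).mulVec u)
              ((Matrix.diagonal s).mulVec u)).mulVec ((Matrix.diagonal s).mulVec x) =
          lam • (Matrix.diagonal s).mulVec x :=
  dpr1_to_dpr1csym_general d u z ρ s (fun i => (hs i).isUnit)
    fun i => by rw [hs2, div_mul_cancel₀ _ (hu i)]
end

section
/- Let $D = \operatorname{diag}(d_1, \dots, d_m) \in \mathbb{C}^{m\times m}$, $z \in \mathbb{C}^m$, and $\rho \in \mathbb{C}$ with $\rho \neq 0$. For any index $i$, the diagonal entry $d_i$ is an eigenvalue of $A = D + \rho\, z z^\top$ (i.e., there exists $x \neq 0$ with $Ax = d_i x$) if and only if $z_i = 0$ or there exists $j \neq i$ with $d_j = d_i$. -/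
open Matrix

/-!
An eigenvalue `c` of `A` is a zero of `det (A - c • 1)`. For `A = diagonal d + vecMulVec u v` and
`c = d i`, the diagonal part of `A - c • 1` has zero `i`-th row, so the `i`-th row is `u i • v`.
Pulling out the factor `u i` and using the row `v` to clear the rank-one term from all other rows
leaves a diagonal matrix with one row replaced by `v`, whence
`det (A - d i • 1) = u i * v i * ∏ j ≠ i, (d j - d i)`.
-/

section CommRing

variable {n R : Type*} [Fintype n] [DecidableEq n] [CommRing R]

theorem det_add_vecMulVec_of_row_eq_zero {A : Matrix n n R} {i : n} (hA : A i = 0)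
    (u v : n → R) : (A + vecMulVec u v).det = u i * (A.updateRow i v).det := by
  have factor_row :
      A + vecMulVec u v = (A + vecMulVec (Function.update u i 0) v).updateRow i (u i • v) := by
    ext k l
    obtain rfl | hk := eq_or_ne k i
    · simp [vecMulVec_apply, hA]
    · simp [vecMulVec_apply, hk]
  have clear_rows :
      ((A + vecMulVec (Function.update u i 0) v).updateRow i v).det = (A.updateRow i v).det := by
    refine det_eq_of_forall_row_eq_smul_add_const (Function.update u i 0) i
      (Function.update_self i 0 u) fun k l ↦ ?_
    obtain rfl | hk := eq_or_ne k i
    · simp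
    · simp [vecMulVec_apply, hk]
  rw [factor_row, det_updateRow_smul, clear_rows]

theorem det_updateRow_diagonal (a v : n → R) (i : n) :
    ((diagonal a).updateRow i v).det = v i * ∏ j ∈ Finset.univ.erase i, a j := by
  rw [← cramer_transpose_apply, diagonal_transpose, cramer_eq_adjugate_mulVec, adjugate_diagonal,
    mulVec_diagonal, mul_comm]

theorem det_diagonal_add_vecMulVec_sub_smul_one (d u v : n → R) (i : n) :
    (diagonal d + vecMulVec u v - d i • 1).det =
      u i * (v i * ∏ j ∈ Finset.univ.erase i, (d j - d i)) := by
  have shift : diagonal d + vecMulVec u v - d i • 1 =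
      diagonal (fun j ↦ d j - d i) + vecMulVec u v := by
    rw [smul_one_eq_diagonal, add_sub_right_comm, diagonal_sub]
  have row_eq_zero : diagonal (fun j ↦ d j - d i) i = 0 := by
    ext j
    simp [diagonal_apply]
  rw [shift, det_add_vecMulVec_of_row_eq_zero row_eq_zero, det_updateRow_diagonal]

end CommRing

section IsDomain

variable {n R : Type*} [Fintype n] [DecidableEq n] [CommRing R] [IsDomain R]

theorem exists_mulVec_eq_smul_iff_det_sub_smul_one_eq_zero (A : Matrix n n R) (c : R) :
    (∃ x ≠ 0, A *ᵥ x = c • x) ↔ (A - c • 1).det = 0 := by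
  simp_rw [← exists_mulVec_eq_zero_iff, sub_mulVec, smul_mulVec, one_mulVec, sub_eq_zero]

theorem dpr1csym_diagonal_eigenvalue_general (d u v : n → R) (i : n) :
    (∃ x ≠ 0, (diagonal d + vecMulVec u v) *ᵥ x = d i • x) ↔
      u i = 0 ∨ v i = 0 ∨ ∃ j ≠ i, d j = d i := by
  rw [exists_mulVec_eq_smul_iff_det_sub_smul_one_eq_zero, det_diagonal_add_vecMulVec_sub_smul_one]
  simp only [mul_eq_zero, Finset.prod_eq_zero_iff, Finset.mem_erase, Finset.mem_univ, and_true,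
    sub_eq_zero]

end IsDomain

/-- Characterization of when a diagonal entry is an eigenvalue of a
diagonal-plus-rank-one complex symmetric matrix. -/
theorem dpr1csym_diagonal_eigenvalue (m : ℕ) (d z : Fin m → ℂ) (ρ : ℂ) (hρ : ρ ≠ 0)
    (i : Fin m) :
    (∃ x : Fin m → ℂ, x ≠ 0 ∧
        (Matrix.diagonal d + ρ • vecMulVec z z).mulVec x = d i • x) ↔
      z i = 0 ∨ ∃ j, j ≠ i ∧ d j = d i := by
  simpa [smul_vecMulVec, hρ] using dpr1csym_diagonal_eigenvalue_general d (ρ • z) z i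
end

section
/- Let $D = \operatorname{diag}(d_1, \dots, d_m) \in \mathbb{C}^{m\times m}$, $z \in \mathbb{C}^m$, and $\rho \in \mathbb{C}$ with $\rho \neq 0$. If $\lambda \in \mathbb{C}$ satisfies $\lambda \neq d_i$ for all $i$, then $\lambda$ is an eigenvalue of $A = D + \rho\, z z^\top$ (i.e., there exists $x \neq 0$ with $Ax = \lambda x$) if and only if the secular function vanishes at $\lambda$: $f(\lambda) = 1 + \rho \sum_{i=1}^{m} \frac{z_i^2}{d_i - \lambda} = 0$. -/
open Matrix

/-!
By the matrix determinant lemma, `det (D + ρ u vᵀ - λ) = ∏ i, (d i - λ) * f λ`, where `f` is the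
secular function. Away from the `d i` the product is nonzero, so the characteristic polynomial
vanishes exactly where `f` does.
-/

section RankOneUpdate

variable {n : Type*} [Fintype n] [DecidableEq n]

theorem exists_mulVec_eq_smul_iff_det_sub_scalar_eq_zero {R : Type*} [CommRing R] [IsDomain R]
    (A : Matrix n n R) (μ : R) :
    (∃ x : n → R, x ≠ 0 ∧ A *ᵥ x = μ • x) ↔ (A - scalar n μ).det = 0 := by
  simp only [← exists_mulVec_eq_zero_iff, sub_mulVec, scalar_apply, diagonal_const_mulVec,
    sub_eq_zero]

theorem det_add_vecMulVec {R : Type*} [CommRing R] {A : Matrix n n R} (hA : IsUnit A.det)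
    (u v : n → R) :
    (A + vecMulVec u v).det = A.det * (1 + v ⬝ᵥ A⁻¹ *ᵥ u) := by
  rw [vecMulVec_eq Unit, det_add_replicateCol_mul_replicateRow hA, Matrix.mul_assoc,
    ← replicateCol_mulVec, det_unique (n := Unit), Matrix.add_apply, one_apply_eq,
    replicateRow_mul_replicateCol_apply]

theorem det_diagonal_add_vecMulVec {K : Type*} [Field K] {d : n → K} (hd : ∀ i, d i ≠ 0)
    (u v : n → K) :
    (diagonal d + vecMulVec u v).det = (∏ i, d i) * (1 + ∑ i, u i * v i / d i) := by
  have hdet : (diagonal d).det = ∏ i, d i := det_diagonal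
  have hunit : IsUnit (diagonal d).det :=
    hdet ▸ (Finset.prod_ne_zero_iff.mpr fun i _ => hd i).isUnit
  have hinv : (diagonal d)⁻¹ = diagonal d⁻¹ := by
    refine inv_eq_right_inv ?_
    rw [diagonal_mul_diagonal, ← diagonal_one]
    exact congrArg diagonal (funext fun i => mul_inv_cancel₀ (hd i))
  have hsum : v ⬝ᵥ diagonal d⁻¹ *ᵥ u = ∑ i, u i * v i / d i := by
    refine Finset.sum_congr rfl fun i _ => ?_
    rw [mulVec_diagonal, Pi.inv_apply]
    ring
  rw [det_add_vecMulVec hunit, hdet, hinv, hsum]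

theorem dpr1csym_secular_eigenvalue_general {K : Type*} [Field K] (d u v : n → K) (ρ lam : K)
    (hlam : ∀ i, lam ≠ d i) :
    (∃ x : n → K, x ≠ 0 ∧ (diagonal d + ρ • vecMulVec u v) *ᵥ x = lam • x) ↔
      1 + ρ * ∑ i, u i * v i / (d i - lam) = 0 := by
  have hd (i : n) : d i - lam ≠ 0 := sub_ne_zero.mpr (hlam i).symm
  have hshift : diagonal d + ρ • vecMulVec u v - scalar n lam =
      diagonal (fun i => d i - lam) + vecMulVec (ρ • u) v := by
    rw [add_sub_right_comm, scalar_apply, diagonal_sub, smul_vecMulVec]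
  rw [exists_mulVec_eq_smul_iff_det_sub_scalar_eq_zero, hshift, det_diagonal_add_vecMulVec hd,
    mul_eq_zero_iff_left (Finset.prod_ne_zero_iff.mpr fun i _ => hd i)]
  simp only [Pi.smul_apply, smul_eq_mul, mul_assoc, mul_div_assoc, Finset.mul_sum]

end RankOneUpdate

/-- Away from the diagonal entries of `D`, the eigenvalues of a
diagonal-plus-rank-one complex symmetric matrix are exactly the zeros of the
secular function. -/
theorem dpr1csym_secular_eigenvalue (m : ℕ) (d z : Fin m → ℂ) (ρ : ℂ) (hρ : ρ ≠ 0)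
    (lam : ℂ) (hlam : ∀ i, lam ≠ d i) :
    (∃ x : Fin m → ℂ, x ≠ 0 ∧
        (Matrix.diagonal d + ρ • vecMulVec z z).mulVec x = lam • x) ↔
      1 + ρ * ∑ i, z i ^ 2 / (d i - lam) = 0 := by
  simpa only [sq] using dpr1csym_secular_eigenvalue_general d z z ρ lam hlam
end

section
/- Let $A \in \mathbb{C}^{m\times m}$ be complex symmetric ($A^\top = A$) and diagonalizable over $\mathbb{C}$. Then there exist a complex orthogonal matrix $W \in \mathbb{C}^{m\times m}$ (i.e., $W^\top W = I$) and a diagonal matrix $\Lambda \in \mathbb{C}^{m\times m}$ such that $A = W \Lambda W^\top$. -/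
/-!
The heart of the matter is a polar decomposition: over an algebraically closed field of
characteristic different from two, an invertible matrix `P` factors as `W * S` with `Wᵀ * W = 1` and
`S` a polynomial in the symmetric matrix `Pᵀ * P`. One takes for `S` a square root of `Pᵀ * P`,
which exists because `X` is a square modulo every polynomial that does not vanish at `0`.

If `P` conjugates a symmetric matrix `D` to a symmetric matrix, then `Pᵀ * P` commutes with `D`,
hence so does `S`, and `P * D * P⁻¹ = W * (S * D * S⁻¹) * W⁻¹ = W * D * Wᵀ`.
-/

open Matrix

section SquareRoot

open Polynomial

variable {K : Type*} [Field K]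

lemma exists_quadratic_eq_zero_of_ne_zero_or_ne_zero [IsAlgClosed K] {a b : K} (c : K)
    (hab : a ≠ 0 ∨ b ≠ 0) : ∃ x, a * x ^ 2 + b * x + c = 0 := by
  have hdegree : (C a * X ^ 2 + C b * X + C c).degree ≠ 0 := by
    by_cases ha : a = 0
    · simp [ha, degree_linear (hab.resolve_left (not_not.2 ha))]
    · simp [degree_quadratic ha]
  simpa using IsAlgClosed.exists_root _ hdegree

lemma exists_X_sub_C_mul_dvd_sq_sub [IsAlgClosed K] [NeZero (2 : K)] {a : K} {f p q : K[X]}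
    (ha : p.eval a ≠ 0) (hq : f ∣ q ^ 2 - p) : ∃ r : K[X], (X - C a) * f ∣ r ^ 2 - p := by
  obtain ⟨h, hh⟩ := hq
  have heval : q.eval a ^ 2 - p.eval a = f.eval a * h.eval a := by
    simpa using congrArg (eval a) hh
  have hne : f.eval a ≠ 0 ∨ 2 * q.eval a ≠ 0 := by
    by_contra! hzero
    have hqa : q.eval a = 0 := (mul_eq_zero.1 hzero.2).resolve_left two_ne_zero
    exact ha (by simpa [hzero.1, hqa] using heval)
  -- `(q + c f)² - p = f (f c² + 2 q c + h)`, so `c` must be a root of the last factor at `a`.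
  obtain ⟨c, hc⟩ := exists_quadratic_eq_zero_of_ne_zero_or_ne_zero (h.eval a) hne
  have hdvd : X - C a ∣ f * C c ^ 2 + 2 * q * C c + h :=
    dvd_iff_isRoot.2 (by simpa using hc)
  refine ⟨q + C c * f, ?_⟩
  have hfactor : (q + C c * f) ^ 2 - p = (f * C c ^ 2 + 2 * q * C c + h) * f := by
    linear_combination hh
  exact hfactor ▸ mul_dvd_mul_right hdvd f

lemma exists_prod_X_sub_C_dvd_sq_sub [IsAlgClosed K] [NeZero (2 : K)] {s : Multiset K}
    {p : K[X]} (hs : ∀ a ∈ s, p.eval a ≠ 0) :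
    ∃ q : K[X], (s.map (X - C ·)).prod ∣ q ^ 2 - p := by
  induction s using Multiset.induction_on with
  | empty => exact ⟨0, by simp⟩
  | cons a s ih =>
    obtain ⟨q, hq⟩ := ih fun b hb => hs b (Multiset.mem_cons_of_mem hb)
    simpa using exists_X_sub_C_mul_dvd_sq_sub (hs a (Multiset.mem_cons_self a s)) hq

lemma exists_dvd_sq_sub_of_isCoprime [IsAlgClosed K] [NeZero (2 : K)] {f p : K[X]} (hf : f ≠ 0)
    (hfp : IsCoprime f p) : ∃ q : K[X], f ∣ q ^ 2 - p := by
  have hroots : ∀ a ∈ f.roots, p.eval a ≠ 0 := by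
    intro a ha hpa
    obtain ⟨u, v, huv⟩ := hfp
    simpa [hpa, (mem_roots'.1 ha).2.eq_zero] using congrArg (eval a) huv
  obtain ⟨q, hq⟩ := exists_prod_X_sub_C_dvd_sq_sub hroots
  refine ⟨q, ?_⟩
  rwa [(IsAlgClosed.splits f).eq_prod_roots,
    (isUnit_C.2 (leadingCoeff_ne_zero.2 hf).isUnit).mul_left_dvd]

variable {B : Type*} [Ring B] [Algebra K B] {b : B}

lemma isCoprime_minpoly_X_of_isUnit (hint : IsIntegral K b) (hb : IsUnit b) :
    IsCoprime (minpoly K b) X := by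
  refine (irreducible_X.coprime_iff_not_dvd.2 ?_).symm
  rintro ⟨g, hg⟩
  have hbg : b * aeval b g = 0 := by simpa [hg] using minpoly.aeval K b
  have hdvd : X * g ∣ 1 * g := by
    rw [← hg, one_mul]
    exact minpoly.dvd K b (hb.mul_right_eq_zero.1 hbg)
  have hg0 : g ≠ 0 := right_ne_zero_of_mul (hg ▸ minpoly.ne_zero hint)
  exact not_isUnit_X (isUnit_of_dvd_one ((mul_dvd_mul_iff_right hg0).1 hdvd))

lemma exists_aeval_sq_eq_of_isUnit [IsAlgClosed K] [NeZero (2 : K)] (hint : IsIntegral K b)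
    (hb : IsUnit b) : ∃ q : K[X], aeval b q ^ 2 = b := by
  obtain ⟨q, hq⟩ := exists_dvd_sq_sub_of_isCoprime (minpoly.ne_zero hint)
    (isCoprime_minpoly_X_of_isUnit hint hb)
  exact ⟨q, by simpa [sub_eq_zero] using minpoly.dvd_iff.1 hq⟩

end SquareRoot

section Matrix

variable {n : Type*} [Fintype n] [DecidableEq n]

lemma isSymm_aeval {R : Type*} [CommSemiring R] {G : Matrix n n R} (hG : G.IsSymm)
    (q : Polynomial R) : (Polynomial.aeval G q).IsSymm := by
  simp only [IsSymm, Polynomial.aeval_eq_sum_range, transpose_sum, transpose_smul,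
    (hG.pow _).eq]

variable {R K : Type*} [CommRing R] [Field K]

lemma commute_transpose_mul_self_of_isSymm_conj {P D : Matrix n n R} (hP : IsUnit P)
    (hD : D.IsSymm) (hPD : (P * D * P⁻¹).IsSymm) : Commute (Pᵀ * P) D := by
  have hdet := (isUnit_iff_isUnit_det P).1 hP
  have hconj : P * D * P⁻¹ = P⁻¹ᵀ * D * Pᵀ := by
    simpa [mul_assoc, hD.eq] using hPD.eq.symm
  have hcancel : Pᵀ * P⁻¹ᵀ = 1 := by
    rw [← transpose_mul, nonsing_inv_mul P hdet, transpose_one]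
  calc Pᵀ * P * D = Pᵀ * (P * D * P⁻¹) * P := by
        simp only [mul_assoc, nonsing_inv_mul P hdet, mul_one]
    _ = (Pᵀ * P⁻¹ᵀ) * D * (Pᵀ * P) := by simp only [hconj, mul_assoc]
    _ = D * (Pᵀ * P) := by rw [hcancel, one_mul]

lemma orthogonal_mul_inv_of_sq_eq_transpose_mul_self {P S : Matrix n n R} (hS : IsUnit S)
    (hSsymm : S.IsSymm) (hSP : S ^ 2 = Pᵀ * P) : (P * S⁻¹)ᵀ * (P * S⁻¹) = 1 := by
  have hdet := (isUnit_iff_isUnit_det S).1 hS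
  calc (P * S⁻¹)ᵀ * (P * S⁻¹) = S⁻¹ * (Pᵀ * P) * S⁻¹ := by
        simp only [transpose_mul, transpose_nonsing_inv, hSsymm.eq, mul_assoc]
    _ = (S⁻¹ * S) * (S * S⁻¹) := by simp only [← hSP, sq, mul_assoc]
    _ = 1 := by rw [nonsing_inv_mul S hdet, mul_nonsing_inv S hdet, one_mul]

lemma exists_eq_orthogonal_mul_aeval_transpose_mul_self [IsAlgClosed K] [NeZero (2 : K)]
    {P : Matrix n n K} (hP : IsUnit P) :
    ∃ (W : Matrix n n K) (q : Polynomial K),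
      Wᵀ * W = 1 ∧ P = W * Polynomial.aeval (Pᵀ * P) q := by
  have hG : IsUnit (Pᵀ * P) := ((isUnit_transpose P).2 hP).mul hP
  obtain ⟨q, hq⟩ := exists_aeval_sq_eq_of_isUnit (Matrix.isIntegral (Pᵀ * P)) hG
  have hS : IsUnit (Polynomial.aeval (Pᵀ * P) q) :=
    (isUnit_pow_iff two_ne_zero).1 (hq.symm ▸ hG)
  refine ⟨P * (Polynomial.aeval (Pᵀ * P) q)⁻¹, q, ?_, ?_⟩
  · exact orthogonal_mul_inv_of_sq_eq_transpose_mul_self hS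
      (isSymm_aeval (isSymm_transpose_mul_self P) q) hq
  · rw [nonsing_inv_mul_cancel_right _ _ ((isUnit_iff_isUnit_det _).1 hS)]

lemma orthogonal_mul_conj_eq_of_commute {W S D : Matrix n n R} (hW : Wᵀ * W = 1) (hS : IsUnit S)
    (hSD : Commute S D) : W * S * D * (W * S)⁻¹ = W * D * Wᵀ := by
  rw [Matrix.mul_inv_rev, inv_eq_left_inv hW, mul_assoc W, hSD.eq, ← mul_assoc, ← mul_assoc,
    mul_nonsing_inv_cancel_right _ _ ((isUnit_iff_isUnit_det S).1 hS)]

theorem complex_symmetric_orthogonal_eigendecomposition_general [IsAlgClosed K] [NeZero (2 : K)]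
    {A P D : Matrix n n K} (hA : A.IsSymm) (hD : D.IsSymm) (hP : IsUnit P)
    (hAP : A = P * D * P⁻¹) : ∃ W : Matrix n n K, Wᵀ * W = 1 ∧ A = W * D * Wᵀ := by
  have hcomm : Commute (Pᵀ * P) D := commute_transpose_mul_self_of_isSymm_conj hP hD (hAP ▸ hA)
  obtain ⟨W, q, hW, hpolar⟩ := exists_eq_orthogonal_mul_aeval_transpose_mul_self hP
  set S := Polynomial.aeval (Pᵀ * P) q
  have hS : IsUnit S := isUnit_of_mul_isUnit_right (hpolar ▸ hP)
  have hSD : Commute S D := (Algebra.commute_of_mem_adjoin_singleton_of_commute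
    (Polynomial.aeval_mem_adjoin_singleton K _) hcomm.symm).symm
  refine ⟨W, hW, ?_⟩
  calc A = W * S * D * (W * S)⁻¹ := by rw [hAP, ← hpolar]
    _ = W * D * Wᵀ := orthogonal_mul_conj_eq_of_commute hW hS hSD

end Matrix

/-- A diagonalizable complex symmetric matrix admits an eigendecomposition
`A = W Λ Wᵀ` with `W` complex orthogonal (`Wᵀ W = I`) and `Λ` diagonal. -/
theorem complex_symmetric_orthogonal_eigendecomposition (m : ℕ)
    (A : Matrix (Fin m) (Fin m) ℂ) (hA : A.IsSymm)
    (hdiag : ∃ (P D : Matrix (Fin m) (Fin m) ℂ), IsUnit P ∧ D.IsDiag ∧ A = P * D * P⁻¹) :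
    ∃ (W L : Matrix (Fin m) (Fin m) ℂ), Wᵀ * W = 1 ∧ L.IsDiag ∧ A = W * L * Wᵀ := by
  obtain ⟨P, D, hP, hD, hAP⟩ := hdiag
  obtain ⟨W, hW, hAW⟩ :=
    complex_symmetric_orthogonal_eigendecomposition_general hA hD.isSymm hP hAP
  exact ⟨W, D, hW, hD, hAW⟩
end
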